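/- Let M be a finite-dimensional Λ-module with rad(M) = reverse(socseq(M)). Then the pair (rad(M), socseq(M)) is a minimal element of rad-soc(dim_K M): every finite-dimensional Λ-module N with dim_K N = dim_K M, rad(N) ≼ rad(M) and socseq(N) ≼ socseq(M) satisfies rad(N) = rad(M) and socseq(N) = socseq(M). -/

import Mathlib

noncomputable section

/-- The relation on the free algebra killing all products of `L+1` generators. -/
def TruncRel (K : Type*) [Field K] (r L : ℕ) :
    FreeAlgebra K (Fin r) → FreeAlgebra K (Fin r) → Prop := fun a b =>
  (∃ f : Fin (L + 1) → Fin r, a = (List.ofFn fun j => FreeAlgebra.ι K (f j)).prod) ∧ b = 0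

/-- The local truncated path algebra with `r` loops and Loewy length `L+1`:
the quotient of `K⟨X_1,…,X_r⟩` by the two-sided ideal generated by all products
of `L+1` generators. -/
def TruncAlg (K : Type*) [Field K] (r L : ℕ) : Type _ := RingQuot (TruncRel K r L)

instance (K : Type*) [Field K] (r L : ℕ) : Ring (TruncAlg K r L) :=
  inferInstanceAs (Ring (RingQuot _))

instance (K : Type*) [Field K] (r L : ℕ) : Algebra K (TruncAlg K r L) :=
  inferInstanceAs (Algebra K (RingQuot _))

/-- The images of the generators `X i` in the truncated algebra. -/
def gen (K : Type*) [Field K] (r L : ℕ) (i : Fin r) : TruncAlg K r L :=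
  RingQuot.mkAlgHom K (TruncRel K r L) (FreeAlgebra.ι K i)

/-- The two-sided ideal `J` of `Λ` generated by the images of `X_1,…,X_r`,
realized as a `K`-submodule of `Λ`. -/
def Jrad (K : Type*) [Field K] (r L : ℕ) : Submodule K (TruncAlg K r L) :=
  ⊤ * Submodule.span K (Set.range (gen K r L)) * ⊤

/-- `J^l M`, the submodule of `M` given by the action of `J^l`. -/
def jpow (K : Type*) [Field K] (r L : ℕ) (M : Type*) [AddCommGroup M] [Module K M]
    [Module (TruncAlg K r L) M] [IsScalarTower K (TruncAlg K r L) M] (l : ℕ) :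
    Submodule (TruncAlg K r L) M :=
  Submodule.span (TruncAlg K r L)
    {x : M | ∃ a ∈ (Jrad K r L ^ l : Submodule K (TruncAlg K r L)), ∃ m : M, x = a • m}

/-- The socle of a module: the supremum of all simple submodules. -/
def socle (R N : Type*) [Ring R] [AddCommGroup N] [Module R N] : Submodule R N :=
  sSup {p : Submodule R N | IsSimpleModule R ↥p}

/-- The socle series: `socSeries R M l` is `soc_{l-1} M`, so `socSeries R M 0 = soc_{-1} M = ⊥`
and `socSeries R M (l+1) = soc_l M` is the preimage in `M` of `soc (M / soc_{l-1} M)`. -/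
def socSeries (R M : Type*) [Ring R] [AddCommGroup M] [Module R M] : ℕ → Submodule R M
  | 0 => ⊥
  | l + 1 => Submodule.comap (socSeries R M l).mkQ (socle R (M ⧸ socSeries R M l))

/-- Dimension of the subquotient `q / (p ⊓ q)`; for `p ≤ q` this is `dim (q/p)`. -/
def quotDim (K M : Type*) [Field K] [AddCommGroup M] [Module K M]
    (p q : Submodule K M) : ℕ :=
  Module.finrank K (↥q ⧸ Submodule.comap q.subtype p)

/-- The radical layering `rad(M) = (dim_K J^l M / J^{l+1} M)_{l=0,…,L}`. -/
def radLayering (K : Type*) [Field K] (r L : ℕ) (M : Type*) [AddCommGroup M] [Module K M]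
    [Module (TruncAlg K r L) M] [IsScalarTower K (TruncAlg K r L) M] : Fin (L + 1) → ℕ :=
  fun l => quotDim K M ((jpow K r L M ((l : ℕ) + 1)).restrictScalars K)
    ((jpow K r L M (l : ℕ)).restrictScalars K)

/-- The socle layering `socseq(M) = (dim_K soc_l M / soc_{l-1} M)_{l=0,…,L}`. -/
def socLayering (K : Type*) [Field K] (r L : ℕ) (M : Type*) [AddCommGroup M] [Module K M]
    [Module (TruncAlg K r L) M] [IsScalarTower K (TruncAlg K r L) M] : Fin (L + 1) → ℕ :=
  fun l => quotDim K M ((socSeries (TruncAlg K r L) M (l : ℕ)).restrictScalars K)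
    ((socSeries (TruncAlg K r L) M ((l : ℕ) + 1)).restrictScalars K)

/-- The dominance order on `ℕ^{L+1}`: `a ≼ b` iff all partial sums satisfy `≤`. -/
def DomLE (L : ℕ) (a b : Fin (L + 1) → ℕ) : Prop :=
  ∀ l : Fin (L + 1), ∑ j ∈ Finset.Iic l, a j ≤ ∑ j ∈ Finset.Iic l, b j

/-- `reverse (a_0, …, a_L) = (a_L, …, a_0)`. -/
def revTuple (L : ℕ) (a : Fin (L + 1) → ℕ) : Fin (L + 1) → ℕ := fun l => a l.rev

/-!
The ideal `J` maps `J^l M` into `J^{l+1} M`, and every vector killed by `J` lies in the socle. Since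
`J^{L+1} = 0`, the reversed radical filtration `J^{L+1} M ≤ J^L M ≤ ⋯ ≤ M` therefore lies termwise
below the socle filtration, which gives `reverse (rad N) ≼ socseq N` for every `N`. As reversal
turns `≼` around for tuples of equal sum, the hypotheses yield the cycle
`reverse (rad M) ≼ reverse (rad N) ≼ socseq N ≼ socseq M = reverse (rad M)`,
and antisymmetry of `≼` forces equality throughout.
-/

section Dominance

variable {L : ℕ} {a b c : Fin (L + 1) → ℕ}

theorem DomLE.trans (hab : DomLE L a b) (hbc : DomLE L b c) : DomLE L a c :=
  fun l => (hab l).trans (hbc l)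

theorem DomLE.antisymm (hab : DomLE L a b) (hba : DomLE L b a) : a = b := by
  funext l
  induction l using WellFoundedLT.induction with
  | ind l ih =>
    have hIic : ∑ j ∈ Finset.Iic l, a j = ∑ j ∈ Finset.Iic l, b j := (hab l).antisymm (hba l)
    have hIio : ∑ j ∈ Finset.Iio l, a j = ∑ j ∈ Finset.Iio l, b j :=
      Finset.sum_congr rfl fun j hj => ih j (Finset.mem_Iio.1 hj)
    rw [← Finset.Iio_insert, Finset.sum_insert Finset.notMem_Iio_self,
      Finset.sum_insert Finset.notMem_Iio_self, hIio] at hIic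
    exact Nat.add_right_cancel hIic

theorem DomLE.sum_Iio_le (hab : DomLE L a b) (l : Fin (L + 1)) :
    ∑ j ∈ Finset.Iio l, a j ≤ ∑ j ∈ Finset.Iio l, b j := by
  by_cases hl : IsMin l
  · simp [Finset.Iio_eq_empty.2 hl]
  · rw [← Finset.Iic_pred_eq_Iio_of_not_isMin hl]
    exact hab _

theorem revTuple_involutive (L : ℕ) : Function.Involutive (revTuple L) := fun a =>
  funext fun l => congrArg a l.rev_rev

theorem sum_Iic_revTuple (a : Fin (L + 1) → ℕ) (l : Fin (L + 1)) :
    ∑ j ∈ Finset.Iic l, revTuple L a j = ∑ j ∈ Finset.Ici l.rev, a j := by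
  rw [← Fin.map_revPerm_Iic, Finset.sum_map]
  rfl

theorem DomLE.revTuple_of_sum_le (hab : DomLE L a b) (hsum : ∑ j, b j ≤ ∑ j, a j) :
    DomLE L (revTuple L b) (revTuple L a) := by
  intro l
  have split (f : Fin (L + 1) → ℕ) :
      ∑ j ∈ Finset.Iio l.rev, f j + ∑ j ∈ Finset.Ici l.rev, f j = ∑ j, f j := by
    rw [← Finset.sum_add_sum_compl (Finset.Iio l.rev) f]
    congr 2
    ext; simp
  have hIio := hab.sum_Iio_le l.rev
  rw [sum_Iic_revTuple, sum_Iic_revTuple]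
  linarith [split a, split b]

end Dominance

section QuotDim

variable {K V : Type*} [Field K] [AddCommGroup V] [Module K V] [FiniteDimensional K V]

theorem quotDim_eq_sub {p q : Submodule K V} (hpq : p ≤ q) :
    quotDim K V p q = Module.finrank K q - Module.finrank K p := by
  rw [quotDim, Submodule.finrank_quotient, (Submodule.comapSubtypeEquivOfLe hpq).finrank_eq]

theorem sum_Iic_quotDim {F : ℕ → Submodule K V} (hF : Monotone F) {n : ℕ} (l : Fin n) :
    ∑ j ∈ Finset.Iic l, quotDim K V (F j) (F (j + 1)) =
      Module.finrank K (F (l + 1)) - Module.finrank K (F 0) := by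
  have hdim : Monotone fun k => Module.finrank K (F k) :=
    fun _ _ hkm => Submodule.finrank_mono (hF hkm)
  calc ∑ j ∈ Finset.Iic l, quotDim K V (F j) (F (j + 1))
      = ∑ j ∈ Finset.range (l + 1), quotDim K V (F j) (F (j + 1)) := by
        rw [Nat.range_succ_eq_Iic, ← Fin.map_valEmbedding_Iic, Finset.sum_map]
        rfl
    _ = ∑ j ∈ Finset.range (l + 1), (Module.finrank K (F (j + 1)) - Module.finrank K (F j)) :=
        Finset.sum_congr rfl fun j _ => quotDim_eq_sub (hF j.le_succ)
    _ = Module.finrank K (F (l + 1)) - Module.finrank K (F 0) := Finset.sum_range_tsub hdim _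

end QuotDim

section Generators

variable {R A : Type*} [CommSemiring R] [Semiring A] [Algebra R A]

theorem one_sup_span_mul_top_of_adjoin_eq_top {s : Set A} (hs : Algebra.adjoin R s = ⊤) :
    1 ⊔ Submodule.span R s * ⊤ = ⊤ := by
  have htop : (⊤ : Submodule R A) = Submodule.span R (Submonoid.closure s) := by
    rw [← Algebra.top_toSubmodule, ← hs, Algebra.adjoin_eq_span]
  refine eq_top_iff.2 (htop.le.trans (Submodule.span_le.2 fun x hx => ?_))
  induction hx using Submonoid.closure_induction_left with
  | one => exact Submodule.mem_sup_left (Submodule.one_le.1 le_rfl)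
  | mul_left x hx y _ _ =>
    exact Submodule.mem_sup_right
      (Submodule.mul_mem_mul (Submodule.subset_span hx) (Submodule.mem_top (x := y)))

theorem mul_top_mul_top_le (P : Submodule R A) : P * ⊤ * ⊤ ≤ P * ⊤ := by
  rw [mul_assoc]
  gcongr
  exact le_top

theorem top_mul_le_mul_top {S : Submodule R A} (hS : 1 ⊔ S * ⊤ = ⊤) : ⊤ * S ≤ S * ⊤ :=
  calc ⊤ * S = S ⊔ S * ⊤ * S := by rw [← hS, Submodule.sup_mul, one_mul, hS]
    _ ≤ S * ⊤ := by
      refine sup_le (le_mul_of_one_le_right' le_top) ?_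
      rw [mul_assoc]
      gcongr
      exact le_top

theorem top_mul_mul_top_pow_le {S : Submodule R A} (hS : 1 ⊔ S * ⊤ = ⊤) (n : ℕ) :
    (⊤ * S * ⊤) ^ n ≤ S ^ n * ⊤ := by
  induction n with
  | zero => simp
  | succ n ih =>
    have hJ : ⊤ * S * ⊤ ≤ S * ⊤ :=
      (mul_le_mul_left (top_mul_le_mul_top hS) ⊤).trans (mul_top_mul_top_le S)
    calc (⊤ * S * ⊤) ^ (n + 1) ≤ S ^ n * ⊤ * (S * ⊤) := by
          rw [pow_succ]
          gcongr
      _ = S ^ n * (⊤ * S * ⊤) := by simp only [mul_assoc]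
      _ ≤ S ^ n * (S * ⊤) := by gcongr
      _ = S ^ (n + 1) * ⊤ := by rw [pow_succ, mul_assoc]

end Generators

section TruncatedAlgebra

variable (K : Type*) [Field K] (r L : ℕ)

/-- The quotient map `K⟨X_1,…,X_r⟩ → Λ`, typed so that its codomain carries the algebra structure
of `TruncAlg` rather than that of the underlying `RingQuot`. -/
def TruncAlg.mkAlgHom : FreeAlgebra K (Fin r) →ₐ[K] TruncAlg K r L :=
  RingQuot.mkAlgHom K (TruncRel K r L)

theorem TruncAlg.mkAlgHom_surjective : Function.Surjective (TruncAlg.mkAlgHom K r L) :=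
  RingQuot.mkAlgHom_surjective K (TruncRel K r L)

theorem adjoin_range_gen : Algebra.adjoin K (Set.range (gen K r L)) = ⊤ := by
  have hrange : Set.range (gen K r L) =
      TruncAlg.mkAlgHom K r L '' Set.range (FreeAlgebra.ι K) :=
    Set.range_comp (TruncAlg.mkAlgHom K r L) (FreeAlgebra.ι K)
  rw [hrange, ← AlgHom.map_adjoin, FreeAlgebra.adjoin_range_ι, Algebra.map_top,
    AlgHom.range_eq_top]
  exact TruncAlg.mkAlgHom_surjective K r L

theorem one_sup_span_range_gen_mul_top : 1 ⊔ Submodule.span K (Set.range (gen K r L)) * ⊤ = ⊤ :=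
  one_sup_span_mul_top_of_adjoin_eq_top (adjoin_range_gen K r L)

theorem one_sup_Jrad : 1 ⊔ Jrad K r L = ⊤ := by
  rw [eq_top_iff, ← one_sup_span_range_gen_mul_top, Jrad]
  gcongr
  exact le_mul_of_one_le_left' le_top

theorem span_range_gen_pow_eq_bot : Submodule.span K (Set.range (gen K r L)) ^ (L + 1) = ⊥ := by
  rw [Submodule.span_pow, Submodule.span_eq_bot]
  intro x hx
  obtain ⟨f, rfl⟩ := Set.mem_pow.1 hx
  choose i hi using fun j => (f j).2
  have hzero : TruncAlg.mkAlgHom K r L (List.ofFn fun j => FreeAlgebra.ι K (i j)).prod = 0 :=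
    (RingQuot.mkAlgHom_rel K ⟨⟨i, rfl⟩, rfl⟩).trans (map_zero (TruncAlg.mkAlgHom K r L))
  rw [map_list_prod, List.map_ofFn] at hzero
  simp only [← hi]
  exact hzero

theorem Jrad_pow_loewyLength_eq_bot : Jrad K r L ^ (L + 1) = ⊥ := by
  have hle := top_mul_mul_top_pow_le (one_sup_span_range_gen_mul_top K r L) (L + 1)
  rwa [span_range_gen_pow_eq_bot, Submodule.bot_mul, le_bot_iff] at hle

variable {K r L}

theorem mul_mem_Jrad {a : TruncAlg K r L} (ha : a ∈ Jrad K r L) (b : TruncAlg K r L) :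
    a * b ∈ Jrad K r L :=
  mul_top_mul_top_le _ (Submodule.mul_mem_mul ha Submodule.mem_top)

end TruncatedAlgebra

section Socle

theorem mem_socle_of_smul_mem_span_singleton (K : Type*) {A Q : Type*} [DivisionRing K] [Ring A]
    [SMul K A] [AddCommGroup Q] [Module K Q] [Module A Q] [IsScalarTower K A Q] {x : Q}
    (hx : ∀ a : A, a • x ∈ Submodule.span K {x}) : x ∈ socle A Q := by
  rcases eq_or_ne x 0 with rfl | hx0
  · exact zero_mem _
  let line : Submodule A Q :=
    { Submodule.span K {x} with
      smul_mem' := by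
        intro a y hy
        obtain ⟨c, rfl⟩ := Submodule.mem_span_singleton.1 hy
        rw [← smul_one_smul A c x, smul_smul]
        exact hx _ }
  have hsimple : IsSimpleModule A line :=
    (isSimpleModule_iff ..).2
      (is_simple_module_of_finrank_eq_one (finrank_span_singleton (K := K) hx0))
  exact le_sSup (show line ∈ {p : Submodule A Q | IsSimpleModule A p} from hsimple)
    (Submodule.mem_span_singleton_self (R := K) x)

theorem socSeries_monotone (R M : Type*) [Ring R] [AddCommGroup M] [Module R M] :
    Monotone (socSeries R M) :=
  monotone_nat_of_le_succ fun l =>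
    (socSeries R M l).ker_mkQ.ge.trans (Submodule.comap_mono bot_le)

end Socle

section Layerings

variable (K : Type*) [Field K] (r L : ℕ) (M : Type*) [AddCommGroup M] [Module K M]
  [Module (TruncAlg K r L) M] [IsScalarTower K (TruncAlg K r L) M]

variable {K r L M} in
theorem mem_socle_of_forall_Jrad_smul_eq_zero {x : M} (hx : ∀ a ∈ Jrad K r L, a • x = 0) :
    x ∈ socle (TruncAlg K r L) M := by
  refine mem_socle_of_smul_mem_span_singleton K fun a => ?_
  have ha : a ∈ 1 ⊔ Jrad K r L := one_sup_Jrad K r L ▸ Submodule.mem_top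
  obtain ⟨_, hc, j, hj, rfl⟩ := Submodule.mem_sup.1 ha
  obtain ⟨c, rfl⟩ := Submodule.mem_one.1 hc
  rw [add_smul, hx j hj, add_zero, algebraMap_smul]
  exact Submodule.smul_mem _ c (Submodule.mem_span_singleton_self x)

theorem jpow_zero : jpow K r L M 0 = ⊤ :=
  eq_top_iff.2 fun x _ => Submodule.subset_span
    ⟨1, (pow_zero (Jrad K r L)).symm ▸ Submodule.one_le.1 le_rfl, x, (one_smul _ x).symm⟩

theorem jpow_loewyLength_eq_bot : jpow K r L M (L + 1) = ⊥ := by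
  rw [jpow, Submodule.span_eq_bot, Jrad_pow_loewyLength_eq_bot]
  rintro _ ⟨a, ha, m, rfl⟩
  rw [(Submodule.mem_bot K).1 ha, zero_smul]

theorem jpow_antitone : Antitone (jpow K r L M) := by
  refine antitone_nat_of_succ_le fun l => Submodule.span_le.2 ?_
  rintro _ ⟨a, ha, m, rfl⟩
  rw [pow_succ] at ha
  induction ha using Submodule.mul_induction_on' with
  | mem_mul_mem b hb c _ => exact Submodule.subset_span ⟨b, hb, c • m, mul_smul b c m⟩
  | add a _ b _ iha ihb => exact add_smul a b m ▸ add_mem iha ihb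

variable {K r L M} in
theorem smul_mem_jpow_succ {l : ℕ} {x : M} (hx : x ∈ jpow K r L M l) {a : TruncAlg K r L}
    (ha : a ∈ Jrad K r L) : a • x ∈ jpow K r L M (l + 1) := by
  induction hx using Submodule.span_induction generalizing a with
  | mem x hx =>
    obtain ⟨b, hb, m, rfl⟩ := hx
    have hab : a * b ∈ Jrad K r L ^ (l + 1) :=
      pow_succ' (Jrad K r L) l ▸ Submodule.mul_mem_mul ha hb
    exact Submodule.subset_span ⟨a * b, hab, m, smul_smul a b m⟩
  | zero => simp only [smul_zero, zero_mem]
  | add x y _ _ ihx ihy => exact smul_add a x y ▸ add_mem (ihx ha) (ihy ha)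
  | smul b x _ ihx => exact smul_smul a b x ▸ ihx (mul_mem_Jrad ha b)

theorem jpow_le_socSeries {k l : ℕ} (hkl : L + 1 ≤ k + l) :
    jpow K r L M l ≤ socSeries (TruncAlg K r L) M k := by
  induction k generalizing l with
  | zero =>
    calc jpow K r L M l ≤ jpow K r L M (L + 1) := jpow_antitone K r L M (by lia)
      _ = ⊥ := jpow_loewyLength_eq_bot K r L M
  | succ k ih =>
    intro x hx
    refine mem_socle_of_forall_Jrad_smul_eq_zero (K := K) fun a ha => ?_
    rw [← map_smul, Submodule.mkQ_apply, Submodule.Quotient.mk_eq_zero]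
    exact ih (by lia) (smul_mem_jpow_succ hx ha)

variable [FiniteDimensional K M]

theorem sum_Iic_socLayering (l : Fin (L + 1)) :
    ∑ j ∈ Finset.Iic l, socLayering K r L M j =
      Module.finrank K (socSeries (TruncAlg K r L) M (l + 1)) := by
  have hmono : Monotone fun k => (socSeries (TruncAlg K r L) M k).restrictScalars K :=
    fun _ _ hkm => socSeries_monotone _ M hkm
  have hbot : (socSeries (TruncAlg K r L) M 0).restrictScalars K = ⊥ := rfl
  refine (sum_Iic_quotDim hmono l).trans ?_
  rw [hbot, finrank_bot, Nat.sub_zero]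
  rfl

theorem sum_Iic_revTuple_radLayering (l : Fin (L + 1)) :
    ∑ j ∈ Finset.Iic l, revTuple L (radLayering K r L M) j =
      Module.finrank K (jpow K r L M l.rev) := by
  let F (k : ℕ) : Submodule K M := (jpow K r L M (L + 1 - k)).restrictScalars K
  have hmono : Monotone F := fun _ _ hkm => jpow_antitone K r L M (Nat.sub_le_sub_left hkm _)
  have hbot : F 0 = ⊥ := congrArg (Submodule.restrictScalars K) (jpow_loewyLength_eq_bot K r L M)
  have hlayer (j : Fin (L + 1)) :
      revTuple L (radLayering K r L M) j = quotDim K M (F j) (F (j + 1)) := by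
    have hsucc : (j.rev : ℕ) + 1 = L + 1 - j := by grind
    rw [revTuple, radLayering, hsucc, Fin.val_rev]
  calc ∑ j ∈ Finset.Iic l, revTuple L (radLayering K r L M) j
      = Module.finrank K (F (l + 1)) - Module.finrank K (F 0) := by
        rw [← sum_Iic_quotDim hmono]
        exact Finset.sum_congr rfl fun j _ => hlayer j
    _ = Module.finrank K (jpow K r L M l.rev) := by
        rw [hbot, finrank_bot, Nat.sub_zero, Fin.val_rev]
        rfl

theorem sum_radLayering : ∑ j, radLayering K r L M j = Module.finrank K M := by
  have hlast := sum_Iic_revTuple_radLayering K r L M (Fin.last L)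
  have huniv : Finset.Ici (0 : Fin (L + 1)) = Finset.univ := Finset.Ici_bot
  rwa [sum_Iic_revTuple, Fin.rev_last, huniv, Fin.val_zero, jpow_zero,
    Submodule.topEquiv.restrictScalars K |>.finrank_eq] at hlast

theorem revTuple_radLayering_domLE_socLayering :
    DomLE L (revTuple L (radLayering K r L M)) (socLayering K r L M) := by
  intro l
  have hle : jpow K r L M l.rev ≤ socSeries (TruncAlg K r L) M (l + 1) :=
    jpow_le_socSeries K r L M (by grind)
  rw [sum_Iic_revTuple_radLayering, sum_Iic_socLayering]
  exact Submodule.finrank_mono (s := (jpow K r L M l.rev).restrictScalars K)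
    (t := (socSeries (TruncAlg K r L) M (l + 1)).restrictScalars K) hle

end Layerings

theorem stmt6_general {K : Type*} [Field K] {r L : ℕ}
    {M : Type*} [AddCommGroup M] [Module K M] [Module (TruncAlg K r L) M]
    [IsScalarTower K (TruncAlg K r L) M] [FiniteDimensional K M]
    {N : Type*} [AddCommGroup N] [Module K N] [Module (TruncAlg K r L) N]
    [IsScalarTower K (TruncAlg K r L) N] [FiniteDimensional K N]
    (h : radLayering K r L M = revTuple L (socLayering K r L M))
    (hdim : Module.finrank K M ≤ Module.finrank K N)
    (hrad : DomLE L (radLayering K r L N) (radLayering K r L M))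
    (hsoc : DomLE L (socLayering K r L N) (socLayering K r L M)) :
    radLayering K r L N = radLayering K r L M ∧ socLayering K r L N = socLayering K r L M := by
  have hM : socLayering K r L M = revTuple L (radLayering K r L M) := by
    rw [h, revTuple_involutive]
  have hMN : DomLE L (revTuple L (radLayering K r L M)) (revTuple L (radLayering K r L N)) :=
    hrad.revTuple_of_sum_le (by rwa [sum_radLayering, sum_radLayering])
  have hN := revTuple_radLayering_domLE_socLayering K r L N
  rw [hM] at hsoc ⊢
  exact ⟨(revTuple_involutive L).injective ((hN.trans hsoc).antisymm hMN),
    hsoc.antisymm (hMN.trans hN)⟩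

/-- If `rad M = reverse (socseq M)`, then `(rad M, socseq M)` is a minimal
element of `rad-soc(dim_K M)`. -/
theorem stmt6 (K : Type) [Field K] [IsAlgClosed K] (r L : ℕ) (hr : 0 < r) (hL : 0 < L)
    (M : Type) [AddCommGroup M] [Module K M] [Module (TruncAlg K r L) M]
    [IsScalarTower K (TruncAlg K r L) M] [FiniteDimensional K M]
    (h : radLayering K r L M = revTuple L (socLayering K r L M)) :
    ∀ (N : Type) (_ : AddCommGroup N) (_ : Module K N)
        (_ : Module (TruncAlg K r L) N) (_ : IsScalarTower K (TruncAlg K r L) N)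
        (_ : FiniteDimensional K N),
      Module.finrank K N = Module.finrank K M →
      DomLE L (radLayering K r L N) (radLayering K r L M) →
      DomLE L (socLayering K r L N) (socLayering K r L M) →
      radLayering K r L N = radLayering K r L M ∧
        socLayering K r L N = socLayering K r L M := by
  intro N _ _ _ _ _ hdim hrad hsoc
  exact stmt6_general h hdim.ge hrad hsoc
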